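/- ψ(1/12) = −γ − ln 24 − (2 + √3)·(π/2) + √3·ln(2 − √3) − ln √3, where ψ is the digamma function and γ is the Euler–Mascheroni constant. -/

import Mathlib

noncomputable def digamma (x : ℝ) : ℝ := deriv Real.Gamma x / Real.Gamma x

/-!
Convexity of `log Γ`, whose slope on `[x, x + 1]` is `log x`, squeezes `digamma` around `log`, and
the functional equation then gives `digamma x = lim (log n - ∑ k < n, 1 / (x + k))`. For `x = r / q`
and `ζ` a primitive `q`-th root of unity, the `ζ^(-j r)`-weighted sum over `j` of the series
`∑ ζ^(j m) / m` keeps exactly the terms `q / m = 1 / (x + k)` with `m = q k + r`. These series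
converge to `-log (1 - ζ^j)` for `0 < j < q` and form the harmonic series for `j = 0`, whence
Gauss's digamma theorem
`digamma (r / q) = -γ - log q + ∑ 0 < j < q, ζ^(-j r) log (1 - ζ^j)`.
For `q = 12` and `r = 1`, the reflections `j ↦ 12 - j` and `j ↦ 6 - j` leave only the angles
`π / 6`, `π / 3`, `π / 2` and `π`.
-/

open Filter Finset Topology

theorem hasDerivAt_log_Gamma {x : ℝ} (hx : ∀ m : ℕ, x ≠ -m) :
    HasDerivAt (Real.log ∘ Real.Gamma) (digamma x) x :=
  (Real.differentiableAt_Gamma hx).hasDerivAt.log (Real.Gamma_ne_zero hx)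

theorem ne_neg_natCast_of_pos {x : ℝ} (hx : 0 < x) (m : ℕ) : x ≠ -m := by
  have : (0 : ℝ) ≤ m := m.cast_nonneg
  linarith

theorem digamma_add_one {x : ℝ} (hx : ∀ m : ℕ, x ≠ -m) : digamma (x + 1) = digamma x + x⁻¹ := by
  have hx₀ : x ≠ 0 := by simpa using hx 0
  have hshift : (fun y ↦ Real.Gamma (y + 1)) =ᶠ[𝓝 x] fun y ↦ y * Real.Gamma y :=
    (eventually_ne_nhds hx₀).mono fun y hy ↦ Real.Gamma_add_one hy
  have hderiv : deriv Real.Gamma (x + 1) = Real.Gamma x + x * deriv Real.Gamma x := by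
    rw [← deriv_comp_add_const, hshift.deriv_eq,
      deriv_fun_mul differentiableAt_fun_id (Real.differentiableAt_Gamma hx)]
    simp
  have hΓ := Real.Gamma_ne_zero hx
  rw [digamma, digamma, hderiv, Real.Gamma_add_one hx₀]
  field_simp
  ring

theorem digamma_add_natCast {x : ℝ} (hx : ∀ m : ℕ, x ≠ -m) (n : ℕ) :
    digamma (x + n) = digamma x + ∑ k ∈ range n, (x + k)⁻¹ := by
  induction n with
  | zero => simp
  | succ n ih =>
    have hxn (m : ℕ) : x + n ≠ -m := by
      have := hx (n + m)
      contrapose! this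
      push_cast
      linear_combination this
    rw [sum_range_succ, Nat.cast_succ, ← add_assoc, digamma_add_one hxn, ih, add_assoc]

theorem slope_log_Gamma_add_one {x : ℝ} (hx : 0 < x) :
    slope (Real.log ∘ Real.Gamma) x (x + 1) = Real.log x := by
  rw [slope_def_field, Function.comp_apply, Function.comp_apply, Real.Gamma_add_one hx.ne',
    Real.log_mul hx.ne' (Real.Gamma_pos_of_pos hx).ne']
  ring

theorem digamma_le_log {x : ℝ} (hx : 0 < x) : digamma x ≤ Real.log x :=
  slope_log_Gamma_add_one hx ▸ Real.convexOn_log_Gamma.le_slope_of_hasDerivAt hx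
    (Set.mem_Ioi.2 (by positivity)) (lt_add_one x)
    (hasDerivAt_log_Gamma (ne_neg_natCast_of_pos hx))

theorem log_sub_inv_le_digamma {x : ℝ} (hx : 0 < x) : Real.log x - x⁻¹ ≤ digamma x := by
  have hslope := Real.convexOn_log_Gamma.slope_le_of_hasDerivAt hx
    (Set.mem_Ioi.2 (by positivity)) (lt_add_one x)
    (hasDerivAt_log_Gamma (ne_neg_natCast_of_pos (by positivity)))
  rw [slope_log_Gamma_add_one hx, digamma_add_one (ne_neg_natCast_of_pos hx)] at hslope
  linarith

theorem tendsto_digamma_sub_log : Tendsto (fun x ↦ digamma x - Real.log x) atTop (𝓝 0) := by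
  refine tendsto_of_tendsto_of_tendsto_of_le_of_le'
    (by simpa using (tendsto_inv_atTop_zero (𝕜 := ℝ)).neg) tendsto_const_nhds ?_ ?_
  all_goals filter_upwards [eventually_gt_atTop (0 : ℝ)] with x hx
  · linarith [log_sub_inv_le_digamma hx]
  · linarith [digamma_le_log hx]

theorem tendsto_log_sub_sum_inv {x : ℝ} (hx : ∀ m : ℕ, x ≠ -m) :
    Tendsto (fun n : ℕ ↦ Real.log n - ∑ k ∈ range n, (x + k)⁻¹) atTop (𝓝 (digamma x)) := by
  have hn : Tendsto (fun n : ℕ ↦ (n : ℝ)) atTop atTop := tendsto_natCast_atTop_atTop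
  have hdig := tendsto_digamma_sub_log.comp (tendsto_atTop_add_const_left _ x hn)
  have hlog := (Real.tendsto_log_comp_add_sub_log x).comp hn
  have hsum := (hdig.add hlog).const_sub (digamma x)
  rw [add_zero, sub_zero] at hsum
  refine hsum.congr fun n ↦ ?_
  simp only [Function.comp_apply, digamma_add_natCast hx n, add_comm (n : ℝ) x]
  ring

open scoped ComplexOrder in
theorem one_sub_mem_slitPlane {z : ℂ} (hz : ‖z‖ ≤ 1) (hz₁ : z ≠ 1) :
    1 - z ∈ Complex.slitPlane := by
  rw [Complex.mem_slitPlane_iff_not_le_zero, sub_nonpos]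
  intro hle
  have hre : z.re = 1 :=
    le_antisymm ((Complex.re_le_norm z).trans hz) (Complex.le_def.1 hle).1
  exact hz₁ (Complex.ext hre (Complex.le_def.1 hle).2.symm)

theorem norm_geom_sum_le {K : Type*} [NormedDivisionRing K] {z : K} (hz : ‖z‖ ≤ 1) (hz₁ : z ≠ 1)
    (n : ℕ) : ‖∑ i ∈ range n, z ^ i‖ ≤ 2 / ‖z - 1‖ := by
  rw [geom_sum_eq hz₁, norm_div]
  gcongr
  calc ‖z ^ n - 1‖ ≤ ‖z ^ n‖ + ‖(1 : K)‖ := norm_sub_le _ _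
    _ ≤ 1 + 1 := by
      rw [norm_pow, norm_one]
      gcongr
      exact pow_le_one₀ (norm_nonneg z) hz
    _ = 2 := one_add_one_eq_two

theorem tendsto_sum_pow_div_neg_log {z : ℂ} (hz : ‖z‖ ≤ 1) (hz₁ : z ≠ 1) :
    Tendsto (fun n ↦ ∑ m ∈ range n, z ^ (m + 1) / (m + 1)) atTop (𝓝 (-Complex.log (1 - z))) := by
  -- Dirichlet's test gives convergence on the boundary circle; Abel's theorem finds the limit.
  have hcauchy : CauchySeq fun n ↦ ∑ m ∈ range n, z ^ (m + 1) / (m + 1) := by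
    have hanti : Antitone fun m : ℕ ↦ 1 / ((m : ℝ) + 1) := fun a b hab ↦
      one_div_le_one_div_of_le (by positivity) (by gcongr)
    have hbound (n : ℕ) : ‖∑ m ∈ range n, z ^ (m + 1)‖ ≤ 2 / ‖z - 1‖ := by
      simp_rw [pow_succ', ← mul_sum, norm_mul]
      exact (mul_le_of_le_one_left (norm_nonneg _) hz).trans (norm_geom_sum_le hz hz₁ n)
    convert! hanti.cauchySeq_series_mul_of_tendsto_zero_of_bounded
      tendsto_one_div_add_atTop_nhds_zero_nat hbound using 3 with n m
    rw [Complex.real_smul, div_eq_inv_mul]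
    push_cast
    rw [one_div]
  obtain ⟨l, hl⟩ := cauchySeq_tendsto_of_complete hcauchy
  suffices l = -Complex.log (1 - z) from this ▸ hl
  have habel := tendsto_map'_iff.1 (Complex.tendsto_tsum_powerSeries_nhdsWithin_lt hl)
  have hcont : ContinuousAt (fun x : ℝ ↦ -Complex.log (1 - x * z) / x) 1 := by
    have := one_sub_mem_slitPlane hz hz₁
    refine ContinuousAt.div (ContinuousAt.neg (ContinuousAt.clog (by fun_prop) ?_)) (by fun_prop)
      ?_ <;> simp [this]
  have hlog : Tendsto (fun x : ℝ ↦ -Complex.log (1 - x * z) / x) (𝓝[<] 1)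
      (𝓝 (-Complex.log (1 - z))) := by
    simpa [ContinuousAt] using hcont.tendsto.mono_left nhdsWithin_le_nhds
  refine tendsto_nhds_unique (habel.congr' ?_) hlog
  filter_upwards [Ioo_mem_nhdsLT zero_lt_one] with x ⟨hx₀, hx₁⟩
  have hnorm : ‖x * z‖ < 1 := by
    rw [norm_mul, Complex.norm_of_nonneg hx₀.le]
    exact mul_lt_one_of_nonneg_of_lt_one_left hx₀.le hx₁ hz
  have hx : (x : ℂ) ≠ 0 := by exact_mod_cast hx₀.ne'
  rw [Function.comp_apply, ← ((Complex.hasSum_taylorSeries_neg_log' hnorm).div_const _).tsum_eq]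
  refine tsum_congr fun m ↦ ?_
  rw [mul_pow, pow_succ (x : ℂ)]
  field_simp

theorem sum_range_mul_ite_modEq {M : Type*} [AddCommMonoid M] {q a : ℕ} (ha : a < q) (f : ℕ → M)
    (n : ℕ) :
    ∑ m ∈ range (q * n), (if a ≡ m [MOD q] then f m else 0) = ∑ k ∈ range n, f (q * k + a) := by
  induction n with
  | zero => simp
  | succ n ih =>
    rw [mul_add_one, sum_range_add, ih, sum_range_succ,
      sum_eq_single_of_mem a (mem_range.2 ha), if_pos (by simp [Nat.ModEq])]
    intro b hb hba
    rw [if_neg]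
    simpa [Nat.ModEq, Nat.mod_eq_of_lt ha, Nat.mod_eq_of_lt (mem_range.1 hb)] using hba.symm

theorem sum_inv_pow_mul_pow_eq_ite {K : Type*} [Field K] {ζ : K} {q : ℕ}
    (hζ : IsPrimitiveRoot ζ q) (a b : ℕ) :
    ∑ j ∈ range q, ((ζ ^ j)⁻¹) ^ a * (ζ ^ j) ^ b = if a ≡ b [MOD q] then (q : K) else 0 := by
  rcases eq_or_ne q 0 with rfl | hq
  · simp
  have hζ₀ : ζ ^ a ≠ 0 := pow_ne_zero _ (hζ.ne_zero hq)
  set w := ζ ^ b / ζ ^ a with hw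
  have hsum : ∑ j ∈ range q, ((ζ ^ j)⁻¹) ^ a * (ζ ^ j) ^ b = ∑ j ∈ range q, w ^ j := by
    refine sum_congr rfl fun j _ ↦ ?_
    rw [hw, div_pow, inv_pow, ← pow_mul, ← pow_mul, ← pow_mul, ← pow_mul, mul_comm a, mul_comm b,
      div_eq_inv_mul]
  have hw_one : w = 1 ↔ a ≡ b [MOD q] := by
    rw [hw, div_eq_one_iff_eq hζ₀, hζ.eq_orderOf,
      (hζ.isOfFinOrder hq).pow_eq_pow_iff_modEq, Nat.ModEq.comm]
  rw [hsum]
  split_ifs with h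
  · simp [hw_one.2 h]
  · have hwq : w ^ q = 1 := by
      rw [hw, div_pow, ← pow_mul, ← pow_mul, mul_comm b, mul_comm a, pow_mul, pow_mul,
        hζ.pow_eq_one, one_pow, one_pow, div_one]
    rw [geom_sum_eq (mt hw_one.1 h), hwq, sub_self, zero_div]

theorem sum_range_inv_add_eq_sum_root_pow {K : Type*} [Field K] [CharZero K] {ζ : K} {q r : ℕ}
    (hζ : IsPrimitiveRoot ζ q) (hr : 0 < r) (hrq : r ≤ q) (n : ℕ) :
    ∑ k ∈ range n, ((r : K) / q + k)⁻¹ =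
      ∑ j ∈ range q, ((ζ ^ j)⁻¹) ^ r * ∑ m ∈ range (q * n), (ζ ^ j) ^ (m + 1) / ((m : K) + 1) := by
  obtain ⟨a, rfl⟩ := Nat.exists_eq_add_one.2 hr
  have hq : (q : K) ≠ 0 := by exact_mod_cast (hr.trans_le hrq).ne'
  symm
  calc
    _ = ∑ m ∈ range (q * n), (∑ j ∈ range q, ((ζ ^ j)⁻¹) ^ (a + 1) * (ζ ^ j) ^ (m + 1)) /
          ((m : K) + 1) := by
      simp_rw [mul_sum, sum_div, mul_div_assoc]
      exact sum_comm
    _ = ∑ m ∈ range (q * n), if a ≡ m [MOD q] then q / ((m : K) + 1) else 0 := by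
      simp_rw [sum_inv_pow_mul_pow_eq_ite hζ, Nat.ModEq.add_iff_right rfl, ite_div, zero_div]
    _ = ∑ k ∈ range n, q / (((q * k + a : ℕ) : K) + 1) := sum_range_mul_ite_modEq hrq _ n
    _ = _ := by
      refine sum_congr rfl fun k _ ↦ ?_
      rw [div_add' _ _ _ hq, inv_div]
      push_cast
      ring_nf

theorem tendsto_log_sub_sum_inv_mul {q : ℕ} (hq : q ≠ 0) :
    Tendsto (fun n : ℕ ↦ Real.log n - ∑ m ∈ range (q * n), 1 / ((m : ℝ) + 1)) atTop
      (𝓝 (-Real.eulerMascheroniConstant - Real.log q)) := by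
  have hharm := (Real.tendsto_harmonic_sub_log.comp
    (tendsto_id.const_mul_atTop' hq.bot_lt)).neg.sub_const (Real.log q)
  refine hharm.congr' ?_
  filter_upwards [eventually_ne_atTop 0] with n hn
  simp only [Function.comp_apply, id, harmonic, Nat.cast_mul, one_div]
  rw [Real.log_mul (by exact_mod_cast hq) (by exact_mod_cast hn)]
  push_cast
  ring

theorem digamma_natCast_div_eq_sum_log {ζ : ℂ} {q r : ℕ} (hζ : IsPrimitiveRoot ζ q) (hr : 0 < r)
    (hrq : r ≤ q) :
    (digamma (r / q) : ℂ) = -Real.eulerMascheroniConstant - Real.log q +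
      ∑ j ∈ Ico 1 q, ((ζ ^ j)⁻¹) ^ r * Complex.log (1 - ζ ^ j) := by
  have hq : 0 < q := hr.trans_le hrq
  have hleft := (tendsto_log_sub_sum_inv
    (ne_neg_natCast_of_pos (x := r / q) (by positivity))).ofReal
  have hharm := (tendsto_log_sub_sum_inv_mul hq.ne').ofReal
  have hroots : Tendsto (fun n ↦ ∑ j ∈ Ico 1 q,
      ((ζ ^ j)⁻¹) ^ r * ∑ m ∈ range (q * n), (ζ ^ j) ^ (m + 1) / ((m : ℂ) + 1)) atTop
      (𝓝 (∑ j ∈ Ico 1 q, ((ζ ^ j)⁻¹) ^ r * -Complex.log (1 - ζ ^ j))) := by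
    refine tendsto_finsetSum _ fun j hj ↦ Tendsto.const_mul _ ?_
    obtain ⟨hj₁, hjq⟩ := mem_Ico.1 hj
    have hnorm : ‖ζ ^ j‖ ≤ 1 := by rw [norm_pow, hζ.norm'_eq_one hq.ne', one_pow]
    exact (tendsto_sum_pow_div_neg_log hnorm (hζ.pow_ne_one_of_pos_of_lt (by omega) hjq)).comp
      (tendsto_id.const_mul_atTop' hq)
  have hright := hharm.sub hroots
  simp only [mul_neg, sum_neg_distrib, sub_neg_eq_add] at hright
  push_cast at hleft hright ⊢
  refine tendsto_nhds_unique hleft (hright.congr fun n ↦ ?_)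
  rw [sum_range_inv_add_eq_sum_root_pow hζ hr hrq, range_eq_Ico (a := q),
    sum_eq_sum_Ico_succ_bot hq]
  simp [sub_sub]

theorem log_one_sub_exp_mul_I {θ : ℝ} (hθ_pos : 0 < θ) (hθ_lt : θ < 2 * Real.pi) :
    Complex.log (1 - Complex.exp (θ * Complex.I)) =
      Real.log (2 * Real.sin (θ / 2)) + ((θ - Real.pi) / 2 : ℝ) * Complex.I := by
  have hsin : 0 < 2 * Real.sin (θ / 2) :=
    mul_pos two_pos (Real.sin_pos_of_pos_of_lt_pi (by linarith) (by linarith))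
  have hα : (θ - Real.pi) / 2 = θ / 2 - Real.pi / 2 := by ring
  have hpolar : 1 - Complex.exp (θ * Complex.I) = (2 * Real.sin (θ / 2) : ℝ) *
      Complex.exp (((θ - Real.pi) / 2 : ℝ) * Complex.I) := by
    have hθ : θ = 2 * (θ / 2) := by ring
    apply Complex.ext
    · rw [Complex.re_ofReal_mul, Complex.sub_re, Complex.one_re, Complex.exp_ofReal_mul_I_re,
        Complex.exp_ofReal_mul_I_re, hα, Real.cos_sub_pi_div_two]
      nth_rw 1 [hθ]
      rw [Real.cos_two_mul, Real.cos_sq']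
      ring
    · rw [Complex.im_ofReal_mul, Complex.sub_im, Complex.one_im, Complex.exp_ofReal_mul_I_im,
        Complex.exp_ofReal_mul_I_im, hα, Real.sin_sub_pi_div_two]
      nth_rw 1 [hθ]
      rw [Real.sin_two_mul]
      ring
  rw [hpolar, Complex.log_ofReal_mul hsin (Complex.exp_ne_zero _), Complex.log_exp]
  all_goals simp only [Complex.im_ofReal_mul, Complex.I_im]
  all_goals linarith

/-- The summand of Gauss's digamma theorem for `digamma (r / q)` at the angle `θ = 2πj / q`: the
real part of `e^(-irθ) log (1 - e^(iθ))`, valid for `0 < θ < 2π`. -/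
noncomputable def gaussSummand (r : ℕ) (θ : ℝ) : ℝ :=
  Real.cos (r * θ) * Real.log (2 * Real.sin (θ / 2)) + Real.sin (r * θ) * ((θ - Real.pi) / 2)

theorem gaussSummand_two_pi_sub (r : ℕ) (θ : ℝ) :
    gaussSummand r (2 * Real.pi - θ) = gaussSummand r θ := by
  have hhalf : (2 * Real.pi - θ) / 2 = Real.pi - θ / 2 := by ring
  rw [gaussSummand, gaussSummand, mul_sub, Real.cos_nat_mul_two_pi_sub,
    Real.sin_nat_mul_two_pi_sub, hhalf, Real.sin_pi_sub]
  ring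

theorem re_exp_inv_pow_mul_log_one_sub_exp (r : ℕ) {θ : ℝ} (hθ_pos : 0 < θ)
    (hθ_lt : θ < 2 * Real.pi) :
    (((Complex.exp (θ * Complex.I))⁻¹) ^ r * Complex.log (1 - Complex.exp (θ * Complex.I))).re =
      gaussSummand r θ := by
  have hpow : ((Complex.exp (θ * Complex.I))⁻¹) ^ r = Complex.exp ((-(r * θ) : ℝ) * Complex.I) := by
    rw [← Complex.exp_neg, ← Complex.exp_nat_mul]
    push_cast
    ring_nf
  rw [hpow, log_one_sub_exp_mul_I hθ_pos hθ_lt, Complex.mul_re, Complex.exp_ofReal_mul_I_re,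
    Complex.exp_ofReal_mul_I_im, Real.cos_neg, Real.sin_neg, gaussSummand]
  simp

theorem digamma_natCast_div {q r : ℕ} (hr : 0 < r) (hrq : r ≤ q) :
    digamma (r / q) = -Real.eulerMascheroniConstant - Real.log q +
      ∑ j ∈ Ico 1 q, gaussSummand r (2 * Real.pi * j / q) := by
  have hq : (0 : ℝ) < q := by exact_mod_cast hr.trans_le hrq
  have hgauss := congrArg Complex.re <| digamma_natCast_div_eq_sum_log
    (Complex.isPrimitiveRoot_exp q (hr.trans_le hrq).ne') hr hrq
  simp only [Complex.ofReal_re, Complex.add_re, Complex.sub_re, Complex.neg_re, Complex.re_sum]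
    at hgauss
  rw [hgauss]
  congr 1
  refine sum_congr rfl fun j hj ↦ ?_
  obtain ⟨hj₁, hjq⟩ := mem_Ico.1 hj
  have hroot : Complex.exp (2 * Real.pi * Complex.I / q) ^ j =
      Complex.exp ((2 * Real.pi * j / q : ℝ) * Complex.I) := by
    rw [← Complex.exp_nat_mul]
    push_cast
    ring_nf
  have : (0 : ℝ) < j := by exact_mod_cast hj₁
  rw [hroot]
  refine re_exp_inv_pow_mul_log_one_sub_exp r (by positivity) ?_
  rw [div_lt_iff₀ hq]
  gcongr

theorem gaussSummand_pi (r : ℕ) : gaussSummand r Real.pi = (-1) ^ r * Real.log 2 := by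
  simp [gaussSummand, Real.cos_nat_mul_pi]

theorem log_two_sub_two_mul_cos (θ : ℝ) :
    Real.log (2 - 2 * Real.cos θ) = 2 * Real.log (2 * Real.sin (θ / 2)) := by
  have hsq : 2 - 2 * Real.cos θ = (2 * Real.sin (θ / 2)) ^ 2 := by
    rw [mul_pow, Real.sin_sq_eq_half_sub, mul_div_cancel₀ _ two_ne_zero]
    ring
  rw [hsq, Real.log_pow, Nat.cast_ofNat]

theorem two_mul_gaussSummand (r : ℕ) (θ : ℝ) :
    2 * gaussSummand r θ =
      Real.cos (r * θ) * Real.log (2 - 2 * Real.cos θ) + Real.sin (r * θ) * (θ - Real.pi) := by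
  rw [gaussSummand, log_two_sub_two_mul_cos]
  ring

theorem sum_Ico_one_two_mul_of_symm {R : Type*} [NonAssocSemiring R] {m : ℕ} (hm : 0 < m)
    {f : ℕ → R} (hf : ∀ j ∈ Ico 1 m, f (2 * m - j) = f j) :
    ∑ j ∈ Ico 1 (2 * m), f j = f m + ∑ j ∈ Ico 1 m, 2 * f j := by
  have hreflect : ∑ j ∈ Ico (m + 1) (2 * m), f j = ∑ j ∈ Ico 1 m, f j := by
    have hend : 2 * m + 1 - m = m + 1 := by omega
    rw [← sum_congr rfl hf, sum_Ico_reflect f 1 (by omega), hend, Nat.add_sub_cancel]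
  rw [← sum_Ico_consecutive f hm (by omega : m ≤ 2 * m),
    sum_eq_sum_Ico_succ_bot (by omega : m < 2 * m), hreflect, ← mul_sum, two_mul]
  exact add_left_comm _ _ _

theorem digamma_natCast_div_two_mul {m r : ℕ} (hr : 0 < r) (hrm : r ≤ 2 * m) :
    digamma (r / (2 * m)) = -Real.eulerMascheroniConstant - Real.log (2 * m) +
      (-1) ^ r * Real.log 2 + ∑ j ∈ Ico 1 m, 2 * gaussSummand r (Real.pi * j / m) := by
  have hm : 0 < m := by omega
  have hm₀ : (m : ℝ) ≠ 0 := by positivity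
  have hangle (j : ℕ) : 2 * Real.pi * j / (2 * m : ℕ) = Real.pi * j / m := by
    push_cast
    field_simp
  have hsymm : ∀ j ∈ Ico 1 m,
      gaussSummand r (Real.pi * (2 * m - j : ℕ) / m) = gaussSummand r (Real.pi * j / m) := by
    intro j hj
    rw [← gaussSummand_two_pi_sub, Nat.cast_sub (by have := mem_Ico.1 hj; omega)]
    congr 1
    push_cast
    field_simp
    ring
  have hgauss := digamma_natCast_div hr hrm
  simp only [hangle] at hgauss
  rw [sum_Ico_one_two_mul_of_symm hm hsymm, mul_div_cancel_right₀ _ hm₀, gaussSummand_pi] at hgauss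
  push_cast at hgauss
  rw [hgauss, add_assoc]

theorem log_two_add_sqrt_three : Real.log (2 + √3) = -Real.log (2 - √3) := by
  rw [← Real.log_inv]
  congr 1
  apply eq_inv_of_mul_eq_one_left
  linear_combination -Real.sq_sqrt (zero_le_three (α := ℝ))

theorem two_mul_gaussSummand_add_pi_sub {r : ℕ} (hr : Odd r) (θ : ℝ) :
    2 * gaussSummand r θ + 2 * gaussSummand r (Real.pi - θ) =
      Real.cos (r * θ) * (Real.log (2 - 2 * Real.cos θ) - Real.log (2 + 2 * Real.cos θ)) -
        Real.pi * Real.sin (r * θ) := by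
  rw [two_mul_gaussSummand, two_mul_gaussSummand, mul_sub (r : ℝ), Real.cos_nat_mul_pi_sub,
    Real.sin_nat_mul_pi_sub, hr.neg_one_pow, Real.cos_pi_sub, mul_neg, sub_neg_eq_add]
  ring

theorem two_mul_gaussSummand_one_pi_div_six_add_pi_sub :
    2 * gaussSummand 1 (Real.pi / 6) + 2 * gaussSummand 1 (Real.pi - Real.pi / 6) =
      √3 * Real.log (2 - √3) - Real.pi / 2 := by
  rw [two_mul_gaussSummand_add_pi_sub odd_one, Nat.cast_one, one_mul, Real.cos_pi_div_six,
    Real.sin_pi_div_six, mul_div_cancel₀ _ two_ne_zero, log_two_add_sqrt_three]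
  ring

theorem two_mul_gaussSummand_one_pi_div_three_add_pi_sub :
    2 * gaussSummand 1 (Real.pi / 3) + 2 * gaussSummand 1 (Real.pi - Real.pi / 3) =
      -Real.log √3 - √3 * (Real.pi / 2) := by
  have hsub : (2 : ℝ) - 2 * (1 / 2) = 1 := by norm_num
  have hadd : (2 : ℝ) + 2 * (1 / 2) = 3 := by norm_num
  rw [two_mul_gaussSummand_add_pi_sub odd_one, Nat.cast_one, one_mul, Real.cos_pi_div_three,
    Real.sin_pi_div_three, hsub, hadd, Real.log_one, Real.log_sqrt zero_le_three]
  ring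

theorem two_mul_gaussSummand_one_pi_div_two :
    2 * gaussSummand 1 (Real.pi / 2) = -(Real.pi / 2) := by
  rw [two_mul_gaussSummand, Nat.cast_one, one_mul, Real.cos_pi_div_two, Real.sin_pi_div_two]
  ring

theorem sum_two_mul_gaussSummand_one_pi_mul_div_six :
    ∑ j ∈ Ico (1 : ℕ) 6, 2 * gaussSummand 1 (Real.pi * j / (6 : ℕ)) =
      √3 * Real.log (2 - √3) - Real.log √3 - (2 + √3) * (Real.pi / 2) := by
  have hangle₁ : Real.pi * (1 : ℕ) / (6 : ℕ) = Real.pi / 6 := by push_cast; ring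
  have hangle₂ : Real.pi * (2 : ℕ) / (6 : ℕ) = Real.pi / 3 := by push_cast; ring
  have hangle₃ : Real.pi * (3 : ℕ) / (6 : ℕ) = Real.pi / 2 := by push_cast; ring
  have hangle₄ : Real.pi * (4 : ℕ) / (6 : ℕ) = Real.pi - Real.pi / 3 := by push_cast; ring
  have hangle₅ : Real.pi * (5 : ℕ) / (6 : ℕ) = Real.pi - Real.pi / 6 := by push_cast; ring
  have hIco : Ico (1 : ℕ) 6 = {1, 2, 3, 4, 5} := rfl
  rw [hIco, sum_insert (by decide), sum_insert (by decide), sum_insert (by decide),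
    sum_insert (by decide), sum_singleton, hangle₁, hangle₂, hangle₃, hangle₄, hangle₅]
  linear_combination two_mul_gaussSummand_one_pi_div_six_add_pi_sub +
    two_mul_gaussSummand_one_pi_div_three_add_pi_sub + two_mul_gaussSummand_one_pi_div_two

theorem digamma_one_twelfth :
    digamma (1 / 12) =
      -Real.eulerMascheroniConstant - Real.log 24
        - (2 + Real.sqrt 3) * (Real.pi / 2)
        + Real.sqrt 3 * Real.log (2 - Real.sqrt 3) - Real.log (Real.sqrt 3) := by
  have hx : ((1 : ℕ) : ℝ) / (2 * (6 : ℕ)) = 1 / 12 := by norm_num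
  have hlog : Real.log 24 = Real.log (2 * (6 : ℕ)) + Real.log 2 := by
    rw [← Real.log_mul (by norm_num) (by norm_num)]
    norm_num
  rw [← hx, digamma_natCast_div_two_mul one_pos (by norm_num),
    sum_two_mul_gaussSummand_one_pi_mul_div_six, hlog]
  ring
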